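/- Let d ≥ 2 and N ≥ 1 be integers and set L = (2/N)·binom(N + d − 1, d − 1). Then there exists a curve γ: [0, L] → Δ_d such that (i) ‖γ(θ) − γ(θ')‖₁ ≤ min{|θ − θ'|, 2} for all θ, θ' ∈ [0, L] (in particular γ is 1-Lipschitz from (ℝ, |·|) to (ℝ^d, ‖·‖₁)), and (ii) for every x ∈ Δ_d there exists θ ∈ [0, L] with ‖γ(θ) − x‖₁ ≤ 2(d − 1)/N, i.e., γ is (2(d−1)/N)-dense in Δ_d with respect to the l₁-norm. -/

import Mathlib

/-- The standard simplex Δ_d: nonnegative entries summing to 1. -/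
def inSimplex {d : ℕ} (p : Fin d → ℝ) : Prop :=
  (∀ i, 0 ≤ p i) ∧ ∑ i, p i = 1

def padj {d : ℕ} (a b : Fin d → ℕ) : Prop := ∑ i, |(a i : ℤ) - b i| ≤ 2

structure PGood (d n : ℕ) (l : List (Fin d → ℕ)) (s t : Fin d → ℕ) : Prop where
  sum : ∀ v ∈ l, ∑ i, v i = n
  cov : ∀ v : Fin d → ℕ, ∑ i, v i = n → v ∈ l
  chain : l.IsChain padj
  head : l.head? = some s
  last : l.getLast? = some t

lemma padj_symm {d : ℕ} {a b : Fin d → ℕ} (h : padj a b) : padj b a := by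
  unfold padj at *
  simpa only [abs_sub_comm] using h

lemma PGood.rev {d n : ℕ} {l : List (Fin d → ℕ)} {s t : Fin d → ℕ} (h : PGood d n l s t) :
    PGood d n l.reverse t s where
  sum := by simpa using h.sum
  cov := by simpa using h.cov
  chain := by
    rw [List.isChain_reverse]
    exact h.chain.imp fun a b hab => padj_symm hab
  head := by simpa using h.last
  last := by simpa using h.head

lemma padj_single {d : ℕ} (n : ℕ) (j : Fin (d+1)) :
    padj ((Pi.single j.succ n : Fin (d+2) → ℕ) + Pi.single 0 1)
      (Fin.cons 0 (Pi.single j (n+1))) := by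
  unfold padj
  rw [Fin.sum_univ_succ]
  have : ∀ i : Fin (d+1), |((((Pi.single j.succ n : Fin (d+2) → ℕ) + Pi.single 0 1 : Fin (d+2) → ℕ) i.succ : ℕ) : ℤ) -
      ((Fin.cons 0 (Pi.single j (n+1)) : Fin (d+2) → ℕ) i.succ : ℕ)| = if i = j then 1 else 0 := by
    intro i
    by_cases h : i = j
    · subst h; simp
    · have h' : i.succ ≠ j.succ := by simpa using h
      simp [h, h']
  rw [Finset.sum_congr rfl fun i _ => this i]
  simp [Pi.single_apply, (Fin.succ_ne_zero j).symm]

lemma PGood.step {d n : ℕ} {l : List (Fin (d+2) → ℕ)} {m : List (Fin (d+1) → ℕ)}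
    {j : Fin (d+1)} {t : Fin (d+1)}
    (hl : PGood (d+2) n l (Pi.single 0 n) (Pi.single j.succ n))
    (hm : PGood (d+1) (n+1) m (Pi.single j (n+1)) (Pi.single t (n+1))) :
    PGood (d+2) (n+1) (l.map (· + Pi.single 0 1) ++ m.map (Fin.cons 0))
      (Pi.single 0 (n+1)) (Pi.single t.succ (n+1)) where
  sum := by
    intro v hv
    rw [List.mem_append, List.mem_map, List.mem_map] at hv
    rcases hv with ⟨w, hw, rfl⟩ | ⟨w, hw, rfl⟩
    · simp [Finset.sum_add_distrib, hl.sum w hw]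
    · simp [Fin.sum_univ_succ (n := d+1), hm.sum w hw]
  cov := by
    intro v hv
    rw [List.mem_append, List.mem_map, List.mem_map]
    by_cases h : v 0 = 0
    · right
      refine ⟨Fin.tail v, hm.cov _ ?_, ?_⟩
      · rw [Fin.sum_univ_succ, h] at hv
        simpa [Fin.tail] using hv
      · rw [← h, Fin.cons_self_tail]
    · left
      have e : v - Pi.single 0 1 + Pi.single 0 1 = v := by
        funext i
        by_cases hi : i = 0
        · subst hi; simp; omega
        · simp [hi]
      refine ⟨v - Pi.single 0 1, hl.cov _ ?_, e⟩
      rw [← e] at hv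
      simp only [Pi.add_apply, Finset.sum_add_distrib] at hv
      simpa using hv
  chain := by
    rw [List.isChain_append]
    refine ⟨?_, ?_, ?_⟩
    · rw [List.isChain_map]
      refine hl.chain.imp fun a b hab => ?_
      simpa [padj] using hab
    · rw [List.isChain_map]
      refine hm.chain.imp fun a b hab => ?_
      simpa [padj, Fin.sum_univ_succ (n := d+1)] using hab
    · intro x hx y hy
      simp only [List.getLast?_map, hl.last, List.head?_map, hm.head, Option.map_some,
        Option.mem_some_iff] at hx hy
      subst hx hy
      exact padj_single n j
  head := by
    simp [List.head?_append, hl.head, ← Pi.single_add]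
  last := by
    rw [List.getLast?_append, List.getLast?_map, hm.last]
    simp
    funext i
    refine Fin.cases ?_ (fun i => ?_) i
    · simp [Pi.single_apply, (Fin.succ_ne_zero t).symm]
    · simp [Pi.single_apply]

lemma pgood_zero (d : ℕ) (s t : Fin d): PGood d 0 [0] (Pi.single s 0) (Pi.single t 0) where
  sum := by simp
  cov := by
    intro v hv
    simp at hv
    simp; funext i; simp [hv]
  chain := by simp
  head := by simp
  last := by simp

lemma pgood_exists (d : ℕ) : ∀ n : ℕ, ∃ l : List (Fin (d+1) → ℕ), l.length = (n+d).choose d ∧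
    PGood (d+1) n l (Pi.single 0 n) (Pi.single (Fin.last d) n) := by
  induction d with
  | zero =>
    intro n
    refine ⟨[fun _ => n], by simp, ?_, ?_, ?_, ?_, ?_⟩
    · simp
    · intro v hv
      simp at hv
      simp; funext i; rw [Fin.fin_one_eq_zero i]; exact hv
    · simp
    · simp; funext i; rw [Fin.fin_one_eq_zero i]; simp
    · simp; funext i; rw [Fin.fin_one_eq_zero i]; simp
  | succ d ih =>
    suffices H : ∀ n : ℕ, (∃ l : List (Fin (d+2) → ℕ), l.length = (n+(d+1)).choose (d+1) ∧
        PGood (d+2) n l (Pi.single 0 n) (Pi.single (Fin.last d).succ n)) ∧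
        (∃ l : List (Fin (d+2) → ℕ), l.length = (n+(d+1)).choose (d+1) ∧
        PGood (d+2) n l (Pi.single 0 n) (Pi.single (Fin.succ 0) n)) from fun n => (H n).1
    intro n
    induction n with
    | zero => exact ⟨⟨[0], by simp, pgood_zero _ _ _⟩, ⟨[0], by simp, pgood_zero _ _ _⟩⟩
    | succ n ihn =>
      obtain ⟨⟨l, hl, hl'⟩, ⟨k, hk, hk'⟩⟩ := ihn
      obtain ⟨m, hm, hm'⟩ := ih (n+1)
      have key : (n+1+(d+1)).choose (d+1) = (n+(d+1)).choose (d+1) + (n+1+d).choose d := by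
        rw [show n+1+(d+1) = (n+1+d)+1 by ring, Nat.choose_succ_succ,
          show n+(d+1) = n+1+d by ring, add_comm]
      exact ⟨⟨_, by simp [hk, hm, key], hk'.step hm'⟩, ⟨_, by simp [hl, hm, key], hl'.step hm'.rev⟩⟩

lemma pseq_exists (d n : ℕ) : ∃ f : ℕ → Fin (d+1) → ℕ, (∀ k, ∑ i, f k i = n) ∧
    (∀ k, padj (f k) (f (k+1))) ∧
    ∀ v : Fin (d+1) → ℕ, ∑ i, v i = n → ∃ k < (n+d).choose d, f k = v := by
  obtain ⟨l, hl, h⟩ := pgood_exists d n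
  have hpos : 0 < l.length := by rw [hl]; exact Nat.choose_pos (by omega)
  refine ⟨fun k => l[min k (l.length - 1)]'(by omega), fun k => h.sum _ (List.getElem_mem _), ?_, ?_⟩
  · intro k
    by_cases hk : k + 1 < l.length
    · have := List.isChain_iff_getElem.1 h.chain k hk
      simpa [show min k (l.length - 1) = k by omega, show min (k+1) (l.length - 1) = k+1 by omega]
        using this
    · have e : min (k+1) (l.length - 1) = min k (l.length - 1) := by omega
      have e2 : l[min (k+1) (l.length - 1)]'(by omega) = l[min k (l.length - 1)]'(by omega) := by
        congr 1
      show padj (l[min k (l.length - 1)]'(by omega)) (l[min (k+1) (l.length - 1)]'(by omega))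
      rw [e2]
      simp [padj]
  · intro v hv
    obtain ⟨k, hk, e⟩ := List.getElem_of_mem (h.cov v hv)
    refine ⟨k, hl ▸ hk, ?_⟩
    simpa [show min k (l.length - 1) = k by omega] using e

/-- weight -/
noncomputable def pw (s : ℝ) (k : ℕ) : ℝ := min s ((k + 1 : ℕ) : ℝ) - min s (k : ℝ)

noncomputable def pint (g : ℕ → ℝ) (M : ℕ) (s : ℝ) : ℝ :=
  g 0 + ∑ k ∈ Finset.range M, pw s k * (g (k+1) - g k)

lemma pint_of_ge (g : ℕ → ℝ) (M : ℕ) (s : ℝ) (h : (M : ℝ) ≤ s) : pint g M s = g M := by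
  have : ∀ k ∈ Finset.range M, pw s k * (g (k+1) - g k) = g (k+1) - g k := by
    intro k hk
    have h1 : ((k + 1 : ℕ) : ℝ) ≤ M := by exact_mod_cast Finset.mem_range.1 hk
    unfold pw
    rw [min_eq_right (h1.trans h), min_eq_right]
    · push_cast; ring
    · push_cast at h1; linarith
  rw [pint, Finset.sum_congr rfl this, Finset.sum_range_sub]; ring

lemma pint_nonneg (g : ℕ → ℝ) (hg : ∀ k, 0 ≤ g k) (M : ℕ) (s : ℝ) (hs : 0 ≤ s) :
    0 ≤ pint g M s := by
  induction M with
  | zero => simpa [pint] using hg 0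
  | succ M ih =>
    have e : pint g (M+1) s = pint g M s + pw s M * (g (M+1) - g M) := by
      simp [pint, Finset.sum_range_succ]; ring
    rw [e]
    rcases le_total s M with h | h
    · have : pw s M = 0 := by
        unfold pw; rw [min_eq_left h, min_eq_left (by push_cast; linarith)]; ring
      simpa [this] using ih
    · rw [pint_of_ge g M s h]
      have h0 : 0 ≤ pw s M := by
        unfold pw; rw [min_eq_right h, sub_nonneg, le_min_iff]; push_cast; constructor <;> linarith
      have h1 : pw s M ≤ 1 := by
        unfold pw; rw [min_eq_right h]
        have := min_le_right s ((M+1 : ℕ) : ℝ); push_cast at *; linarith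
      nlinarith [mul_nonneg h0 (hg (M+1)), mul_nonneg (sub_nonneg.2 h1) (hg M)]

lemma pint_at (g : ℕ → ℝ) (M k : ℕ) (h : k ≤ M) : pint g M k = g k := by
  induction M, h using Nat.le_induction with
  | base => exact pint_of_ge g k k le_rfl
  | succ M hM ih =>
    have h : (k : ℝ) ≤ M := by exact_mod_cast hM
    have : pw k M = 0 := by
      unfold pw; rw [min_eq_left h, min_eq_left (by push_cast; linarith)]; ring
    rw [← ih]
    simp [pint, Finset.sum_range_succ, this]

lemma pw_mono {s t : ℝ} (h : s ≤ t) (k : ℕ) : pw s k ≤ pw t k := by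
  unfold pw; push_cast
  rcases le_total s k with h1 | h1 <;> rcases le_total t k with h2 | h2 <;>
  rcases le_total s (k+1) with h3 | h3 <;> rcases le_total t (k+1) with h4 | h4 <;>
  simp only [min_eq_left, min_eq_right, *] <;> linarith

lemma pint_lip {ι : Type*} [Fintype ι] (f : ℕ → ι → ℝ) (c : ℝ) (hc : 0 ≤ c)
    (hf : ∀ k, ∑ i, |f (k+1) i - f k i| ≤ c) (M : ℕ) {s t : ℝ} (hs : 0 ≤ s) (h : s ≤ t) :
    ∑ i, |pint (fun k => f k i) M t - pint (fun k => f k i) M s| ≤ c * (t - s) := by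
  calc _ ≤ ∑ i, ∑ k ∈ Finset.range M, (pw t k - pw s k) * |f (k+1) i - f k i| := by
        refine Finset.sum_le_sum fun i _ => ?_
        have : pint (fun k => f k i) M t - pint (fun k => f k i) M s =
          ∑ k ∈ Finset.range M, (pw t k - pw s k) * (f (k+1) i - f k i) := by
          simp only [pint, sub_mul, Finset.sum_sub_distrib]; ring
        rw [this]
        refine (Finset.abs_sum_le_sum_abs _ _).trans (Finset.sum_le_sum fun k _ => ?_)
        rw [abs_mul, abs_of_nonneg (sub_nonneg.2 (pw_mono h k))]
    _ = ∑ k ∈ Finset.range M, (pw t k - pw s k) * ∑ i, |f (k+1) i - f k i| := by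
        rw [Finset.sum_comm]; simp only [Finset.mul_sum]
    _ ≤ ∑ k ∈ Finset.range M, (pw t k - pw s k) * c := by
        refine Finset.sum_le_sum fun k _ => ?_
        exact mul_le_mul_of_nonneg_left (hf k) (sub_nonneg.2 (pw_mono h k))
    _ = c * (min t M - min s M) := by
        rw [← Finset.sum_mul, Finset.sum_sub_distrib]
        simp only [pw]
        rw [Finset.sum_range_sub (fun k : ℕ => min t (k:ℝ)), Finset.sum_range_sub (fun k : ℕ => min s (k:ℝ))]
        simp [hs, hs.trans h]; ring
    _ ≤ c * (t - s) := by
        refine mul_le_mul_of_nonneg_left ?_ hc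
        rcases le_total s M with h1 | h1 <;> rcases le_total t M with h2 | h2 <;>
          simp only [min_eq_left, min_eq_right, *] <;> linarith

lemma pround (d N : ℕ) (hN : 1 ≤ N) (x : Fin (d+1) → ℝ) (hx : ∀ i, 0 ≤ x i) (hs : ∑ i, x i = 1) :
    ∃ v : Fin (d+1) → ℕ, ∑ i, v i = N ∧ ∑ i, |(v i : ℝ) / N - x i| ≤ 2 * d / N := by
  have hN' : (0:ℝ) < N := by exact_mod_cast hN
  set w : Fin d → ℕ := fun i => ⌊N * x i.succ⌋₊ with hw
  have hw1 : ∀ i, (w i : ℝ) ≤ N * x i.succ := fun i =>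
    Nat.floor_le (mul_nonneg hN'.le (hx _))
  have hw2 : ∀ i, N * x i.succ ≤ w i + 1 := fun i => (Nat.lt_floor_add_one _).le
  rw [Fin.sum_univ_succ] at hs
  have hS : ∑ i : Fin d, N * x i.succ = N - N * x 0 := by
    rw [← Finset.mul_sum]; linear_combination (N:ℝ) * hs
  have hle1 := Finset.sum_le_sum fun i (_ : i ∈ Finset.univ) => hw1 i
  have hle2 := Finset.sum_le_sum fun i (_ : i ∈ Finset.univ) => hw2 i
  rw [hS] at hle1 hle2
  rw [Finset.sum_add_distrib] at hle2
  simp at hle2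
  have hle : ∑ i, w i ≤ N := by
    have : (∑ i, (w i : ℝ)) ≤ N := by nlinarith [mul_nonneg hN'.le (hx 0)]
    exact_mod_cast this
  refine ⟨Fin.cons (N - ∑ i, w i) w, ?_, ?_⟩
  · rw [Fin.sum_univ_succ]; simp; omega
  · rw [Fin.sum_univ_succ]
    simp only [Fin.cons_zero, Fin.cons_succ]
    rw [Nat.cast_sub hle]; push_cast
    have A : ∀ i : Fin d, |(w i : ℝ) / N - x i.succ| ≤ 1 / N := by
      intro i
      have : (w i : ℝ) / N - x i.succ = (w i - N * x i.succ) / N := by field_simp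
      rw [this, abs_div, abs_of_pos hN']
      gcongr
      rw [abs_le]; constructor <;> linarith [hw1 i, hw2 i]
    have B : |((N:ℝ) - ∑ i, (w i : ℝ)) / N - x 0| ≤ d / N := by
      have : ((N:ℝ) - ∑ i, (w i : ℝ)) / N - x 0 = (N - ∑ i, (w i : ℝ) - N * x 0) / N := by field_simp
      rw [this, abs_div, abs_of_pos hN']
      gcongr
      rw [abs_le]; constructor <;> linarith
    have C := Finset.sum_le_sum fun i (_ : i ∈ Finset.univ) => A i
    simp at C
    calc _ ≤ (d:ℝ) / N + d * (N:ℝ)⁻¹ := add_le_add B C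
      _ = _ := by ring

theorem stmt14 (d N : ℕ) (hd : 2 ≤ d) (hN : 1 ≤ N)
    (L : ℝ) (hL : L = (2 / N) * (Nat.choose (N + d - 1) (d - 1) : ℝ)) :
    ∃ γ : ℝ → Fin d → ℝ,
      (∀ θ ∈ Set.Icc 0 L, inSimplex (γ θ)) ∧
      (∀ θ ∈ Set.Icc 0 L, ∀ θ' ∈ Set.Icc 0 L,
        ∑ i, |γ θ i - γ θ' i| ≤ min |θ - θ'| 2) ∧
      ∀ x : Fin d → ℝ, inSimplex x →
        ∃ θ ∈ Set.Icc 0 L, ∑ i, |γ θ i - x i| ≤ 2 * ((d : ℝ) - 1) / N := by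
  obtain ⟨d, rfl⟩ : ∃ e, d = e + 1 := ⟨d - 1, by omega⟩
  have hN' : (0:ℝ) < N := by exact_mod_cast hN
  obtain ⟨f, hf1, hf2, hf3⟩ := pseq_exists d N
  rw [show N + (d+1) - 1 = N + d by omega, show d + 1 - 1 = d by omega] at hL
  set M := (N+d).choose d with hM
  set F : ℕ → Fin (d+1) → ℝ := fun k i => (f k i : ℝ) / N with hF
  have hF1 : ∀ k, ∑ i, F k i = 1 := by
    intro k
    simp only [hF]
    rw [← Finset.sum_div, ← Nat.cast_sum, hf1, div_self hN'.ne']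
  have hF2 : ∀ k, ∑ i, |F (k+1) i - F k i| ≤ 2 / N := by
    intro k
    have h := padj_symm (hf2 k)
    unfold padj at h
    have h' : ∑ i, |(f (k+1) i : ℝ) - f k i| ≤ 2 := by exact_mod_cast h
    have : ∀ i, |F (k+1) i - F k i| = |(f (k+1) i : ℝ) - f k i| / N := by
      intro i
      simp only [hF]
      rw [← sub_div, abs_div, abs_of_pos hN']
    rw [Finset.sum_congr rfl fun i _ => this i, ← Finset.sum_div]
    gcongr
  set γ : ℝ → Fin (d+1) → ℝ := fun θ i => pint (fun k => F k i) M (θ * N / 2) with hγ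
  have hsimp : ∀ θ ∈ Set.Icc 0 L, inSimplex (γ θ) := by
    intro θ hθ
    refine ⟨fun i => pint_nonneg _ (fun k => by positivity) _ _ ?_, ?_⟩
    · have := hθ.1; positivity
    · simp only [hγ, pint]
      rw [Finset.sum_add_distrib, Finset.sum_comm, hF1]
      simp [← Finset.mul_sum, Finset.sum_sub_distrib, hF1]
  have hlip : ∀ θ ∈ Set.Icc 0 L, ∀ θ' ∈ Set.Icc 0 L, θ ≤ θ' →
      ∑ i, |γ θ' i - γ θ i| ≤ θ' - θ := by
    intro θ hθ θ' hθ' h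
    have := pint_lip F (2/N) (by positivity) hF2 M (s := θ * N / 2) (t := θ' * N / 2)
      (by have := hθ.1; positivity) (by gcongr)
    refine this.trans (le_of_eq ?_)
    field_simp
  refine ⟨γ, hsimp, ?_, ?_⟩
  · intro θ hθ θ' hθ'
    refine le_min ?_ ?_
    · rcases le_total θ θ' with h | h
      · have := hlip θ hθ θ' hθ' h
        rw [abs_sub_comm, abs_of_nonneg (sub_nonneg.2 h)]
        simpa only [abs_sub_comm] using this
      · rw [abs_of_nonneg (sub_nonneg.2 h)]
        exact hlip θ' hθ' θ hθ h
    · obtain ⟨a1, a2⟩ := hsimp θ hθ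
      obtain ⟨b1, b2⟩ := hsimp θ' hθ'
      calc _ ≤ ∑ i, (γ θ i + γ θ' i) := by
            refine Finset.sum_le_sum fun i _ => ?_
            rw [abs_le]; constructor <;> linarith [a1 i, b1 i]
        _ = 2 := by rw [Finset.sum_add_distrib, a2, b2]; norm_num
  · intro x hx
    obtain ⟨v, hv1, hv2⟩ := pround d N hN x hx.1 hx.2
    obtain ⟨k, hk, rfl⟩ := hf3 v hv1
    refine ⟨2 / N * k, ⟨by positivity, ?_⟩, ?_⟩
    · rw [hL]; gcongr
    · have : ∀ i, γ (2 / N * k) i = F k i := by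
        intro i
        simp only [hγ]
        rw [show (2 / N * k * N / 2 : ℝ) = k by field_simp]
        exact pint_at _ _ _ hk.le
      simp only [this, hF]
      push_cast
      simpa using hv2
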